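/- arXiv:2408.08055 — 5 statements merged into one kernel-verified Lean document; each statement's English description precedes it below -/
import Mathlib

section
/- Let f : ℝ^u × ℝ^v → ℝ^v satisfy ‖f(x₁,h) − f(x₂,h)‖₂ ≤ L_x‖x₁ − x₂‖₂ and ‖f(x,h₁) − f(x,h₂)‖₂ ≤ L_h‖h₁ − h₂‖₂ for all arguments, and f(0,0) = 0. Suppose a, b, L_h ∈ (0,1) with a·L_h < b, and let ε ∈ (0,1). Then for every x ∈ ℝ^u and every h ∈ ℝ^v with ‖h‖₂ ≥ (a·L_x/((b − a·L_h)(1 − ε)))·‖x‖₂, one has ⟨h, a·f(x,h) − b·h⟩ ≤ −ε(b − a·L_h)‖h‖₂². -/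
open RealInnerProductSpace

theorem norm_apply_prodMk_le_of_lipschitz {X Y Z : Type*} [SeminormedAddCommGroup X]
    [SeminormedAddCommGroup Y] [SeminormedAddCommGroup Z] {f : X × Y → Z} {K L : ℝ}
    (hK : ∀ x₁ x₂ y, ‖f (x₁, y) - f (x₂, y)‖ ≤ K * ‖x₁ - x₂‖)
    (hL : ∀ x y₁ y₂, ‖f (x, y₁) - f (x, y₂)‖ ≤ L * ‖y₁ - y₂‖)
    (hf0 : f (0, 0) = 0) (x : X) (y : Y) :
    ‖f (x, y)‖ ≤ K * ‖x‖ + L * ‖y‖ := by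
  have hx : ‖f (x, y) - f (0, y)‖ ≤ K * ‖x‖ := by simpa only [sub_zero] using hK x 0 y
  have hy : ‖f (0, y)‖ ≤ L * ‖y‖ := by simpa only [hf0, sub_zero] using hL 0 y 0
  calc ‖f (x, y)‖ ≤ ‖f (x, y) - f (0, y)‖ + ‖f (0, y)‖ := norm_le_norm_sub_add _ _
    _ ≤ K * ‖x‖ + L * ‖y‖ := add_le_add hx hy

section InnerProductSpace

variable {H : Type*} [SeminormedAddCommGroup H] [InnerProductSpace ℝ H]

theorem real_inner_smul_sub_smul_self_le {a : ℝ} (ha : 0 ≤ a) (b : ℝ) (h y : H) :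
    ⟪h, a • y - b • h⟫ ≤ (a * ‖y‖ - b * ‖h‖) * ‖h‖ :=
  calc ⟪h, a • y - b • h⟫ = a * ⟪h, y⟫ - b * ‖h‖ ^ 2 := by
        rw [inner_sub_right, real_inner_smul_right, real_inner_smul_right,
          real_inner_self_eq_norm_sq]
    _ ≤ a * (‖h‖ * ‖y‖) - b * ‖h‖ ^ 2 := by gcongr; exact real_inner_le_norm h y
    _ = (a * ‖y‖ - b * ‖h‖) * ‖h‖ := by ring

theorem iss_lyapunov_decrease_general {X : Type*} [SeminormedAddCommGroup X] {f : X × H → H}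
    {Lx Lh a b ε : ℝ} (hf : ∀ x h, ‖f (x, h)‖ ≤ Lx * ‖x‖ + Lh * ‖h‖)
    (ha : 0 ≤ a) (hab : a * Lh < b) (hε : ε < 1) (x : X) (h : H)
    (hgain : a * Lx / ((b - a * Lh) * (1 - ε)) * ‖x‖ ≤ ‖h‖) :
    ⟪h, a • f (x, h) - b • h⟫ ≤ -(ε * (b - a * Lh)) * ‖h‖ ^ 2 := by
  have hrate : 0 < (b - a * Lh) * (1 - ε) := mul_pos (sub_pos.2 hab) (sub_pos.2 hε)
  -- The input uses up at most the fraction `1 - ε` of the net damping `b - a * Lh`.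
  have hinput : a * Lx * ‖x‖ ≤ ‖h‖ * ((b - a * Lh) * (1 - ε)) := by
    rwa [div_mul_eq_mul_div, div_le_iff₀ hrate] at hgain
  calc ⟪h, a • f (x, h) - b • h⟫ ≤ (a * ‖f (x, h)‖ - b * ‖h‖) * ‖h‖ :=
        real_inner_smul_sub_smul_self_le ha b h _
    _ ≤ (a * (Lx * ‖x‖ + Lh * ‖h‖) - b * ‖h‖) * ‖h‖ := by gcongr; exact hf x h
    _ = (a * Lx * ‖x‖ - (b - a * Lh) * ‖h‖) * ‖h‖ := by ring
    _ ≤ (‖h‖ * ((b - a * Lh) * (1 - ε)) - (b - a * Lh) * ‖h‖) * ‖h‖ := by gcongr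
    _ = -(ε * (b - a * Lh)) * ‖h‖ ^ 2 := by ring

end InnerProductSpace

/-- ISS-Lyapunov decrease condition (paper, proof of Theorem 2): whenever
`‖h‖ ≥ (a·L_x/((b − a·L_h)(1 − ε)))·‖x‖`, one has
`⟨h, a·f(x,h) − b·h⟩ ≤ −ε(b − a·L_h)‖h‖²`. -/
theorem iss_lyapunov_decrease
    (u v : ℕ)
    (f : EuclideanSpace ℝ (Fin u) × EuclideanSpace ℝ (Fin v) → EuclideanSpace ℝ (Fin v))
    (Lx Lh : ℝ)
    (hfx : ∀ x₁ x₂ h, ‖f (x₁, h) - f (x₂, h)‖ ≤ Lx * ‖x₁ - x₂‖)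
    (hfh : ∀ x h₁ h₂, ‖f (x, h₁) - f (x, h₂)‖ ≤ Lh * ‖h₁ - h₂‖)
    (hf0 : f (0, 0) = 0)
    (a b : ℝ) (ha : a ∈ Set.Ioo (0 : ℝ) 1) (hb : b ∈ Set.Ioo (0 : ℝ) 1)
    (hLh : Lh ∈ Set.Ioo (0 : ℝ) 1) (hab : a * Lh < b)
    (ε : ℝ) (hε : ε ∈ Set.Ioo (0 : ℝ) 1) :
    ∀ (x : EuclideanSpace ℝ (Fin u)) (h : EuclideanSpace ℝ (Fin v)),
      ‖h‖ ≥ a * Lx / ((b - a * Lh) * (1 - ε)) * ‖x‖ →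
      ⟪h, a • f (x, h) - b • h⟫ ≤ -(ε * (b - a * Lh)) * ‖h‖ ^ 2 :=
  iss_lyapunov_decrease_general (norm_apply_prodMk_le_of_lipschitz hfx hfh hf0) ha.1.le hab hε.2
end

section
/- Let f : ℝ^u × ℝ^v → ℝ^v satisfy ‖f(x₁,h) − f(x₂,h)‖₂ ≤ L_x‖x₁ − x₂‖₂ and ‖f(x,h₁) − f(x,h₂)‖₂ ≤ L_h‖h₁ − h₂‖₂ for all arguments, and f(0,0) = 0. Suppose a, b, L_h ∈ (0,1) with a·L_h < b. Let x̂ : [0,∞) → ℝ^u be continuous and bounded, and let h : [0,∞) → ℝ^v be differentiable with h'(t) = a·f(x̂(t), h(t)) − b·h(t) for all t ≥ 0 and h(0) = h₀. Then for every t ≥ 0, ‖h(t)‖₂ ≤ e^{−(b − a·L_h)t}‖h₀‖₂ + (a·L_x/(b − a·L_h))·sup_{s∈[0,t]}‖x̂(s)‖₂. -/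
/-!
The linear term `-b • h` pushes the norm down at rate `b * ‖h‖`: the upper right derivative
of `‖h‖` is at most `‖h' + b • h‖ - b * ‖h‖`. For the negative-feedback ODE,
`h' + b • h = a • f (x̂, h)` has norm at most `a * Lx * ‖x̂‖ + a * Lh * ‖h‖`, so `‖h‖` satisfies
Grönwall's differential inequality with the negative rate `-(b - a * Lh)`.
-/

section

open Filter Set Topology

theorem mul_le_mul_sSup_of_forall_mul_nonneg {S : Set ℝ} {L y : ℝ} (hS : BddAbove S)
    (hL : ∀ z ∈ S, 0 ≤ L * z) (hy : y ∈ S) (hy0 : 0 ≤ y) : L * y ≤ L * sSup S := by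
  rcases le_or_gt 0 L with hLnonneg | hLneg
  · exact mul_le_mul_of_nonneg_left (le_csSup hS hy) hLnonneg
  · have hS_nonpos : ∀ z ∈ S, z ≤ 0 := fun z hz => nonpos_of_mul_nonneg_right (hL z hz) hLneg
    have hsup : sSup S ≤ y := csSup_le ⟨y, hy⟩ fun z hz => (hS_nonpos z hz).trans hy0
    exact mul_le_mul_of_nonpos_left hsup hLneg.le

theorem norm_apply_le_of_lipschitz_of_map_zero {E G H : Type*}
    [SeminormedAddCommGroup E] [SeminormedAddCommGroup G] [SeminormedAddCommGroup H]
    {f : E × G → H} {Lx Lh : ℝ}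
    (hfx : ∀ x₁ x₂ y, ‖f (x₁, y) - f (x₂, y)‖ ≤ Lx * ‖x₁ - x₂‖)
    (hfh : ∀ x y₁ y₂, ‖f (x, y₁) - f (x, y₂)‖ ≤ Lh * ‖y₁ - y₂‖)
    (hf0 : f (0, 0) = 0) (x : E) (y : G) : ‖f (x, y)‖ ≤ Lx * ‖x‖ + Lh * ‖y‖ :=
  calc
    ‖f (x, y)‖ ≤ ‖f (x, y) - f (x, 0)‖ + ‖f (x, 0)‖ := norm_le_norm_sub_add _ _
    _ ≤ Lh * ‖y‖ + Lx * ‖x‖ := by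
      gcongr
      · simpa using hfh x y 0
      · simpa [hf0] using hfx x 0 0
    _ = Lx * ‖x‖ + Lh * ‖y‖ := add_comm _ _

theorem gronwallBound_neg_le {δ c ε : ℝ} (hc : 0 < c) (hε : 0 ≤ ε) (x : ℝ) :
    gronwallBound δ (-c) ε x ≤ Real.exp (-c * x) * δ + ε / c := by
  have hdrop : 0 ≤ ε / c * Real.exp (-c * x) := by positivity
  rw [gronwallBound_of_K_ne_0 (neg_ne_zero.2 hc.ne'), div_neg]
  linarith

theorem norm_sub_norm_le_norm_sub_add_smul {E : Type*} [SeminormedAddCommGroup E]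
    [NormedSpace ℝ E] {c : ℝ} (hc : c ≤ 1) (x y : E) :
    ‖y‖ - ‖x‖ ≤ ‖y - x + c • x‖ - c * ‖x‖ := by
  have hsplit : y = (y - x + c • x) + (1 - c) • x := by module
  have htriangle : ‖y‖ ≤ ‖y - x + c • x‖ + (1 - c) * ‖x‖ :=
    calc
      ‖y‖ = ‖(y - x + c • x) + (1 - c) • x‖ := congrArg norm hsplit
      _ ≤ ‖y - x + c • x‖ + ‖(1 - c) • x‖ := norm_add_le _ _
      _ = ‖y - x + c • x‖ + (1 - c) * ‖x‖ := by rw [norm_smul_of_nonneg (sub_nonneg.2 hc)]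
  linarith

variable {F : Type*} [NormedAddCommGroup F] [NormedSpace ℝ F]

theorem eventually_slope_norm_lt_of_norm_deriv_add_smul_lt {h : ℝ → F} {h' : F} {b r s : ℝ}
    (hd : HasDerivWithinAt h h' (Ioi s) s) (hr : ‖h' + b • h s‖ - b * ‖h s‖ < r) :
    ∀ᶠ z in 𝓝[>] s, slope (fun z => ‖h z‖) s z < r := by
  have hlim : Tendsto (fun z => ‖slope h s z + b • h s‖ - b * ‖h s‖) (𝓝[>] s)
      (𝓝 (‖h' + b • h s‖ - b * ‖h s‖)) :=
    (((hasDerivWithinAt_iff_tendsto_slope' self_notMem_Ioi).1 hd).add_const _).norm.sub_const _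
  have hsmall : ∀ᶠ z in 𝓝[>] s, b * (z - s) < 1 :=
    (by fun_prop : Continuous fun z => b * (z - s)).continuousWithinAt.eventually_lt_const
      (by simp)
  filter_upwards [hlim.eventually_lt_const hr, hsmall, self_mem_nhdsWithin] with z hz hbz hsz
  have hpos : 0 < z - s := sub_pos.2 hsz
  refine lt_of_le_of_lt ?_ hz
  calc
    slope (fun z => ‖h z‖) s z = (z - s)⁻¹ * (‖h z‖ - ‖h s‖) := by
      rw [slope_def_field, div_eq_inv_mul]
    _ ≤ (z - s)⁻¹ * (‖h z - h s + (b * (z - s)) • h s‖ - b * (z - s) * ‖h s‖) :=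
      mul_le_mul_of_nonneg_left (norm_sub_norm_le_norm_sub_add_smul hbz.le _ _)
        (inv_nonneg.2 hpos.le)
    _ = ‖(z - s)⁻¹ • (h z - h s + (b * (z - s)) • h s)‖ - b * ‖h s‖ := by
      rw [norm_smul_of_nonneg (inv_nonneg.2 hpos.le)]
      field_simp
    _ = ‖slope h s z + b • h s‖ - b * ‖h s‖ := by
      rw [slope_def_module, smul_add, smul_smul]
      congr 4
      field_simp

theorem norm_le_gronwallBound_of_norm_deriv_right_add_smul_le {h h' : ℝ → F} {b K ε δ t₀ t₁ : ℝ}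
    (hc : ContinuousOn h (Icc t₀ t₁))
    (hd : ∀ s ∈ Ico t₀ t₁, HasDerivWithinAt h (h' s) (Ici s) s) (hδ : ‖h t₀‖ ≤ δ)
    (bound : ∀ s ∈ Ico t₀ t₁, ‖h' s + b • h s‖ ≤ K * ‖h s‖ + ε) :
    ∀ t ∈ Icc t₀ t₁, ‖h t‖ ≤ gronwallBound δ (K - b) ε (t - t₀) :=
  le_gronwallBound_of_liminf_deriv_right_le hc.norm
    (f' := fun s => ‖h' s + b • h s‖ - b * ‖h s‖)
    (fun s hs _ hr => (eventually_slope_norm_lt_of_norm_deriv_add_smul_lt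
      (hd s hs).Ioi_of_Ici hr).frequently)
    hδ fun s hs => by linarith [bound s hs]

theorem negative_feedback_input_to_state_stable_general {E : Type*} [SeminormedAddCommGroup E]
    {f : E × F → F} {Lx Lh : ℝ}
    (hf : ∀ x y, ‖f (x, y)‖ ≤ Lx * ‖x‖ + Lh * ‖y‖)
    {a b : ℝ} (ha : 0 ≤ a) (hab : a * Lh < b) {xhat : ℝ → E} {h : ℝ → F} {t : ℝ} (ht : 0 ≤ t)
    (hxb : BddAbove ((fun s => ‖xhat s‖) '' Icc 0 t))
    (hd : ∀ s ∈ Icc 0 t, HasDerivWithinAt h (a • f (xhat s, h s) - b • h s) (Icc 0 t) s) :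
    ‖h t‖ ≤ Real.exp (-(b - a * Lh) * t) * ‖h 0‖ +
      a * Lx / (b - a * Lh) * sSup ((fun s => ‖xhat s‖) '' Icc 0 t) := by
  set M := sSup ((fun s => ‖xhat s‖) '' Icc 0 t)
  -- `Lx < 0` is possible when the norm of `E` vanishes identically.
  have hLx (x : E) : 0 ≤ Lx * ‖x‖ := by simpa using (norm_nonneg _).trans (hf x 0)
  have hinput : ∀ s ∈ Icc 0 t, Lx * ‖xhat s‖ ≤ Lx * M := fun s hs =>
    mul_le_mul_sSup_of_forall_mul_nonneg hxb (forall_mem_image.2 fun r _ => hLx (xhat r))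
      (mem_image_of_mem _ hs) (norm_nonneg _)
  have hforcing : ∀ s ∈ Ico 0 t,
      ‖a • f (xhat s, h s) - b • h s + b • h s‖ ≤ a * Lh * ‖h s‖ + a * (Lx * M) := fun s hs => by
    rw [sub_add_cancel, norm_smul_of_nonneg ha]
    linarith [mul_le_mul_of_nonneg_left (hf (xhat s) (h s)) ha,
      mul_le_mul_of_nonneg_left (hinput s (Ico_subset_Icc_self hs)) ha]
  have hgronwall : ‖h t‖ ≤ gronwallBound ‖h 0‖ (a * Lh - b) (a * (Lx * M)) (t - 0) :=
    norm_le_gronwallBound_of_norm_deriv_right_add_smul_le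
      (fun s hs => (hd s hs).continuousWithinAt)
      (fun s hs => (hd s (Ico_subset_Icc_self hs)).mono_of_mem_nhdsWithin
        (Icc_mem_nhdsGE_of_mem hs))
      le_rfl hforcing t ⟨ht, le_rfl⟩
  have hM : 0 ≤ a * (Lx * M) := mul_nonneg ha ((hLx _).trans (hinput 0 ⟨le_rfl, ht⟩))
  calc
    ‖h t‖ ≤ gronwallBound ‖h 0‖ (-(b - a * Lh)) (a * (Lx * M)) t := by
      simpa using hgronwall
    _ ≤ Real.exp (-(b - a * Lh) * t) * ‖h 0‖ + a * (Lx * M) / (b - a * Lh) :=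
      gronwallBound_neg_le (sub_pos.2 hab) hM t
    _ = Real.exp (-(b - a * Lh) * t) * ‖h 0‖ + a * Lx / (b - a * Lh) * M := by ring

end

/-- Input-to-state stability of the negative-feedback ODE (paper, Theorem 2), in explicit form:
`‖h(t)‖ ≤ e^{−(b − a·L_h)t}‖h₀‖ + (a·L_x/(b − a·L_h))·sup_{s∈[0,t]}‖x̂(s)‖`. -/
theorem negative_feedback_input_to_state_stable
    (u v : ℕ)
    (f : EuclideanSpace ℝ (Fin u) × EuclideanSpace ℝ (Fin v) → EuclideanSpace ℝ (Fin v))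
    (Lx Lh : ℝ)
    (hfx : ∀ x₁ x₂ h, ‖f (x₁, h) - f (x₂, h)‖ ≤ Lx * ‖x₁ - x₂‖)
    (hfh : ∀ x h₁ h₂, ‖f (x, h₁) - f (x, h₂)‖ ≤ Lh * ‖h₁ - h₂‖)
    (hf0 : f (0, 0) = 0)
    (a b : ℝ) (ha : a ∈ Set.Ioo (0 : ℝ) 1) (hb : b ∈ Set.Ioo (0 : ℝ) 1)
    (hLh : Lh ∈ Set.Ioo (0 : ℝ) 1) (hab : a * Lh < b)
    (xhat : ℝ → EuclideanSpace ℝ (Fin u))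
    (hxc : ContinuousOn xhat (Set.Ici 0))
    (hxb : ∃ C, ∀ t ∈ Set.Ici (0 : ℝ), ‖xhat t‖ ≤ C)
    (h : ℝ → EuclideanSpace ℝ (Fin v)) (h₀ : EuclideanSpace ℝ (Fin v))
    (hd : ∀ t ≥ (0 : ℝ), HasDerivAt h (a • f (xhat t, h t) - b • h t) t)
    (hinit : h 0 = h₀) :
    ∀ t ≥ (0 : ℝ),
      ‖h t‖ ≤ Real.exp (-(b - a * Lh) * t) * ‖h₀‖ +
        a * Lx / (b - a * Lh) * sSup ((fun s => ‖xhat s‖) '' Set.Icc 0 t) := by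
  subst hinit
  exact fun t ht => negative_feedback_input_to_state_stable_general
    (norm_apply_le_of_lipschitz_of_map_zero hfx hfh hf0) ha.1.le hab ht
    (hxb.imp fun _ hC => Set.forall_mem_image.2 fun s hs => hC s hs.1)
    fun s hs => (hd s hs.1).hasDerivWithinAt
end

section
/- Let f : ℝ^u × ℝ^v → ℝ^v satisfy ‖f(x₁,h) − f(x₂,h)‖₂ ≤ L_x‖x₁ − x₂‖₂ and ‖f(x,h₁) − f(x,h₂)‖₂ ≤ L_h‖h₁ − h₂‖₂ for all arguments. Let a > 0, b ∈ ℝ. Then for all x̂, x ∈ ℝ^u and h, h* ∈ ℝ^v, ⟨(a·f(x̂,h) − b·h) − (a·f(x,h*) − b·h*), h − h*⟩ ≤ (a·L_h − b)‖h − h*‖₂² + a·L_x‖x̂ − x‖₂·‖h − h*‖₂. -/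
open RealInnerProductSpace

/-!
Replacing `f(x̂, h)` by `f(x, h)` splits the left-hand side in two. The first part is a perturbation
of size `a L_x ‖x̂ - x‖`, paired with `h - h*` by Cauchy–Schwarz. The second compares the field
`g(x, ·)` with itself at `h` and `h*`; only a one-sided Lipschitz constant of `g(x, ·)` matters
there, and, unlike a Lipschitz constant, it drops by exactly `b` when `b • h` is subtracted.
-/

section OneSidedLipschitz

variable {E : Type*} [SeminormedAddCommGroup E] [InnerProductSpace ℝ E]

theorem real_inner_le_mul_norm_of_norm_le {v : E} {c : ℝ} (hv : ‖v‖ ≤ c) (w : E) :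
    ⟪v, w⟫ ≤ c * ‖w‖ :=
  (real_inner_le_norm v w).trans (by gcongr)

/-- The one-sided Lipschitz condition on a vector field, which bounds the rate at which trajectories
separate. The constant `L` is an arbitrary real number: negative values express contraction. -/
def OneSidedLipschitzWith (L : ℝ) (F : E → E) : Prop :=
  ∀ h₁ h₂, ⟪F h₁ - F h₂, h₁ - h₂⟫ ≤ L * ‖h₁ - h₂‖ ^ 2

namespace OneSidedLipschitzWith

variable {L : ℝ} {F : E → E}

theorem of_norm_sub_le (hF : ∀ h₁ h₂, ‖F h₁ - F h₂‖ ≤ L * ‖h₁ - h₂‖) :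
    OneSidedLipschitzWith L F := fun h₁ h₂ ↦
  calc
    ⟪F h₁ - F h₂, h₁ - h₂⟫ ≤ L * ‖h₁ - h₂‖ * ‖h₁ - h₂‖ :=
      real_inner_le_mul_norm_of_norm_le (hF h₁ h₂) _
    _ = L * ‖h₁ - h₂‖ ^ 2 := by ring

theorem const_smul (hF : OneSidedLipschitzWith L F) {a : ℝ} (ha : 0 ≤ a) :
    OneSidedLipschitzWith (a * L) (fun h ↦ a • F h) := fun h₁ h₂ ↦
  calc
    ⟪a • F h₁ - a • F h₂, h₁ - h₂⟫ = a * ⟪F h₁ - F h₂, h₁ - h₂⟫ := by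
      rw [← smul_sub, real_inner_smul_left]
    _ ≤ a * (L * ‖h₁ - h₂‖ ^ 2) := mul_le_mul_of_nonneg_left (hF h₁ h₂) ha
    _ = a * L * ‖h₁ - h₂‖ ^ 2 := by ring

theorem sub_smul_id (hF : OneSidedLipschitzWith L F) (b : ℝ) :
    OneSidedLipschitzWith (L - b) (fun h ↦ F h - b • h) := fun h₁ h₂ ↦
  calc
    ⟪(F h₁ - b • h₁) - (F h₂ - b • h₂), h₁ - h₂⟫
        = ⟪F h₁ - F h₂, h₁ - h₂⟫ - b * ‖h₁ - h₂‖ ^ 2 := by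
      rw [sub_sub_sub_comm, ← smul_sub, inner_sub_left, real_inner_smul_left,
        real_inner_self_eq_norm_sq]
    _ ≤ L * ‖h₁ - h₂‖ ^ 2 - b * ‖h₁ - h₂‖ ^ 2 := sub_le_sub_right (hF h₁ h₂) _
    _ = (L - b) * ‖h₁ - h₂‖ ^ 2 := by ring

theorem inner_sub_le_of_norm_sub_le (hF : OneSidedLipschitzWith L F) {h₁ w : E} {δ : ℝ}
    (hw : ‖w - F h₁‖ ≤ δ) (h₂ : E) :
    ⟪w - F h₂, h₁ - h₂⟫ ≤ L * ‖h₁ - h₂‖ ^ 2 + δ * ‖h₁ - h₂‖ :=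
  calc
    ⟪w - F h₂, h₁ - h₂⟫ = ⟪F h₁ - F h₂, h₁ - h₂⟫ + ⟪w - F h₁, h₁ - h₂⟫ := by
      rw [← inner_add_left, add_comm, sub_add_sub_cancel]
    _ ≤ L * ‖h₁ - h₂‖ ^ 2 + δ * ‖h₁ - h₂‖ :=
      add_le_add (hF h₁ h₂) (real_inner_le_mul_norm_of_norm_le hw _)

end OneSidedLipschitzWith

theorem robustness_central_estimate_general {X : Type*} [PseudoMetricSpace X] {f : X × E → E}
    {Lx Lh : ℝ} (hfx : ∀ x₁ x₂ h, ‖f (x₁, h) - f (x₂, h)‖ ≤ Lx * dist x₁ x₂)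
    (hfh : ∀ x, OneSidedLipschitzWith Lh (fun h ↦ f (x, h)))
    {a : ℝ} (ha : 0 ≤ a) (b : ℝ) (xhat x : X) (h hstar : E) :
    ⟪(a • f (xhat, h) - b • h) - (a • f (x, hstar) - b • hstar), h - hstar⟫ ≤
      (a * Lh - b) * ‖h - hstar‖ ^ 2 + a * Lx * dist xhat x * ‖h - hstar‖ := by
  have field_oneSided : OneSidedLipschitzWith (a * Lh - b) (fun k ↦ a • f (x, k) - b • k) :=
    ((hfh x).const_smul ha).sub_smul_id b
  have input_perturbation :
      ‖(a • f (xhat, h) - b • h) - (a • f (x, h) - b • h)‖ ≤ a * Lx * dist xhat x := by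
    rw [sub_sub_sub_cancel_right, ← smul_sub, norm_smul_of_nonneg ha, mul_assoc]
    exact mul_le_mul_of_nonneg_left (hfx xhat x h) ha
  exact field_oneSided.inner_sub_le_of_norm_sub_le input_perturbation hstar

end OneSidedLipschitz

/-- Central estimate in the paper's proof of Theorem 3: for the negative-feedback vector field
`g(x,h) = a·f(x,h) − b·h`,
`⟨g(x̂,h) − g(x,h*), h − h*⟩ ≤ (a·L_h − b)‖h − h*‖² + a·L_x‖x̂ − x‖‖h − h*‖`. -/
theorem robustness_central_estimate
    (u v : ℕ)
    (f : EuclideanSpace ℝ (Fin u) × EuclideanSpace ℝ (Fin v) → EuclideanSpace ℝ (Fin v))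
    (Lx Lh : ℝ)
    (hfx : ∀ x₁ x₂ h, ‖f (x₁, h) - f (x₂, h)‖ ≤ Lx * ‖x₁ - x₂‖)
    (hfh : ∀ x h₁ h₂, ‖f (x, h₁) - f (x, h₂)‖ ≤ Lh * ‖h₁ - h₂‖)
    (a b : ℝ) (ha : 0 < a) :
    ∀ (xhat x : EuclideanSpace ℝ (Fin u)) (h hstar : EuclideanSpace ℝ (Fin v)),
      ⟪(a • f (xhat, h) - b • h) - (a • f (x, hstar) - b • hstar), h - hstar⟫ ≤
        (a * Lh - b) * ‖h - hstar‖ ^ 2 + a * Lx * ‖xhat - x‖ * ‖h - hstar‖ := by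
  simpa only [dist_eq_norm] using robustness_central_estimate_general
    (by simpa only [dist_eq_norm] using hfx) (fun x ↦ .of_norm_sub_le (hfh x)) ha.le b
end

section
/- Let a, b, L_h ∈ (0,1) with a·L_h < b, let J : ℝ → L(ℝ^v, ℝ^v) be a family of linear maps with operator norm ‖J(τ)‖ ≤ L_h for all τ, and let χ : ℝ → ℝ^v be differentiable with χ'(τ) = a·J(τ)(χ(τ)) − b·χ(τ) for all τ. Then at every τ₀ with χ(τ₀) ≠ 0, the derivative of τ ↦ ‖χ(τ)‖₂² at τ₀ is strictly negative; in particular ½ d/dτ ‖χ(τ₀)‖₂² ≤ (a·L_h − b)‖χ(τ₀)‖₂² < 0. -/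
/-! Differentiating gives `½ d/dτ ‖χ‖² = ⟪χ, χ'⟫`. The feedback term `-b • χ` contributes exactly
`-b‖χ‖²` to this inner product, and by Cauchy–Schwarz the term `a • J χ` contributes at most
`a * L * ‖χ‖²`, so damping wins as soon as `a * L < b`. -/

section InnerProductSpace

variable {E : Type*} [NormedAddCommGroup E] [InnerProductSpace ℝ E]

theorem real_inner_apply_le_of_opNorm_le {T : E →L[ℝ] E} {c : ℝ} (hT : ‖T‖ ≤ c) (x : E) :
    inner ℝ x (T x) ≤ c * ‖x‖ ^ 2 :=
  calc
    inner ℝ x (T x) ≤ ‖x‖ * ‖T x‖ := real_inner_le_norm x (T x)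
    _ ≤ ‖x‖ * (c * ‖x‖) := by gcongr; exact T.le_of_opNorm_le hT x
    _ = c * ‖x‖ ^ 2 := by ring

theorem real_inner_smul_sub_smul_self_le_s9 {a L : ℝ} (ha : 0 ≤ a) (b : ℝ) {x w : E}
    (hw : inner ℝ x w ≤ L * ‖x‖ ^ 2) :
    inner ℝ x (a • w - b • x) ≤ (a * L - b) * ‖x‖ ^ 2 :=
  calc
    inner ℝ x (a • w - b • x) = a * inner ℝ x w - b * ‖x‖ ^ 2 := by
      rw [inner_sub_right, real_inner_smul_right, real_inner_smul_right,
        real_inner_self_eq_norm_sq]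
    _ ≤ a * (L * ‖x‖ ^ 2) - b * ‖x‖ ^ 2 := by gcongr
    _ = (a * L - b) * ‖x‖ ^ 2 := by ring

theorem half_deriv_norm_sq_eq_inner {χ : ℝ → E} {χ' : E} {τ : ℝ} (hχ : HasDerivAt χ χ' τ) :
    (1 / 2) * deriv (fun t => ‖χ t‖ ^ 2) τ = inner ℝ (χ τ) χ' := by
  rw [hχ.norm_sq.deriv]
  ring

/-- In the variational equation `w` is `J τ₀ (χ τ₀)`, and `hw` holds whenever the logarithmic norm
of `J τ₀` is at most `L`. -/
theorem sensitivity_norm_strict_decay_general {a b L τ₀ : ℝ} (ha : 0 ≤ a) (hab : a * L < b)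
    {χ : ℝ → E} {w : E} (hw : inner ℝ (χ τ₀) w ≤ L * ‖χ τ₀‖ ^ 2)
    (hχ : HasDerivAt χ (a • w - b • χ τ₀) τ₀) (hne : χ τ₀ ≠ 0) :
    deriv (fun τ => ‖χ τ‖ ^ 2) τ₀ < 0 ∧
      (1 / 2) * deriv (fun τ => ‖χ τ‖ ^ 2) τ₀ ≤ (a * L - b) * ‖χ τ₀‖ ^ 2 ∧
      (a * L - b) * ‖χ τ₀‖ ^ 2 < 0 := by
  have rate_le : (1 / 2) * deriv (fun τ => ‖χ τ‖ ^ 2) τ₀ ≤ (a * L - b) * ‖χ τ₀‖ ^ 2 :=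
    (half_deriv_norm_sq_eq_inner hχ).trans_le (real_inner_smul_sub_smul_self_le_s9 ha b hw)
  have bound_neg : (a * L - b) * ‖χ τ₀‖ ^ 2 < 0 :=
    mul_neg_of_neg_of_pos (sub_neg.mpr hab) (pow_pos (norm_pos_iff.mpr hne) 2)
  exact ⟨by linarith, rate_le, bound_neg⟩

end InnerProductSpace

/-- Forgetfulness (paper, Theorem 4): the sensitivity `χ` of the hidden state, satisfying the
variational equation `χ' = a·J(τ)χ − b·χ` with `‖J(τ)‖ ≤ L_h`, has strictly decaying norm:
at every `τ₀` with `χ(τ₀) ≠ 0`, `½ d/dτ ‖χ‖² ≤ (a·L_h − b)‖χ(τ₀)‖² < 0`. -/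
theorem sensitivity_norm_strict_decay
    (vdim : ℕ) (a b Lh : ℝ)
    (ha : a ∈ Set.Ioo (0 : ℝ) 1) (hb : b ∈ Set.Ioo (0 : ℝ) 1)
    (hLh : Lh ∈ Set.Ioo (0 : ℝ) 1) (hab : a * Lh < b)
    (J : ℝ → EuclideanSpace ℝ (Fin vdim) →L[ℝ] EuclideanSpace ℝ (Fin vdim))
    (hJ : ∀ τ, ‖J τ‖ ≤ Lh)
    (χ : ℝ → EuclideanSpace ℝ (Fin vdim))
    (hd : ∀ τ, HasDerivAt χ (a • (J τ) (χ τ) - b • χ τ) τ) :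
    ∀ τ₀ : ℝ, χ τ₀ ≠ 0 →
      deriv (fun τ => ‖χ τ‖ ^ 2) τ₀ < 0 ∧
      (1 / 2) * deriv (fun τ => ‖χ τ‖ ^ 2) τ₀ ≤ (a * Lh - b) * ‖χ τ₀‖ ^ 2 ∧
      (a * Lh - b) * ‖χ τ₀‖ ^ 2 < 0 := by
  intro τ₀ hne
  exact sensitivity_norm_strict_decay_general ha.1.le hab
    (real_inner_apply_le_of_opNorm_le (hJ τ₀) (χ τ₀)) (hd τ₀) hne
end

section
/- Let A be an n×n real positive definite matrix, D an m×m real positive definite matrix, B an n×m real matrix, a ∈ ℝⁿ, d ∈ ℝᵐ, and δ ∈ (0,1). Suppose that for every s ∈ [δ,1] the matrix D − s²·BᵀA⁻¹B is positive definite. Let K = [[A, B],[Bᵀ, D]] and K_δ = [[A, δB],[δBᵀ, D]] be block matrices, k the concatenation of a and d, and k_δ the concatenation of a and δ·d. Then kᵀK⁻¹k ≥ k_δᵀK_δ⁻¹k_δ. -/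
open Matrix

/-! Let `S = diag(1, δ)` be the block-diagonal attenuation. Then `k_δ = Sᴴ k`, whereas the diagonal
blocks of `K_δ` are not attenuated, so that `K_δ = Sᴴ K S + diag(0, (1 - |δ|²) D) ≥ Sᴴ K S` in the
Loewner order. The two Schur complements of the block matrix `[K_δ, Sᴴ; S, K⁻¹]` are
`K_δ - Sᴴ K S` and `K⁻¹ - S K_δ⁻¹ Sᴴ`, so positivity of the first gives positivity of the second;
evaluating the latter at `k` is the claim. -/

section BlockMatrices

variable {𝕜 n m : Type*} [Field 𝕜] [PartialOrder 𝕜] [StarRing 𝕜] [StarOrderedRing 𝕜]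

theorem posSemidef_fromBlocks_zero {R : Type*} [Ring R] [PartialOrder R] [StarRing R] [Finite n]
    [Finite m] {P : Matrix m m R} (hP : P.PosSemidef) :
    (fromBlocks (0 : Matrix n n R) 0 0 P).PosSemidef := by
  classical
  have := Fintype.ofFinite m
  have hconj := hP.conjTranspose_mul_mul_same (fromCols (0 : Matrix m n R) (1 : Matrix m m R))
  rw [conjTranspose_fromCols_eq_fromRows_conjTranspose, fromRows_mul,
    fromRows_mul_fromCols] at hconj
  simpa using hconj

theorem posDef_fromBlocks_iff_posDef_schurComplement [Fintype n] [DecidableEq n] [Finite m]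
    {A : Matrix n n 𝕜} (hA : A.PosDef) (B : Matrix n m 𝕜) (D : Matrix m m 𝕜) :
    (fromBlocks A B Bᴴ D).PosDef ↔ (D - Bᴴ * A⁻¹ * B).PosDef := by
  have := Fintype.ofFinite m
  have : Invertible A := hA.isUnit.invertible
  have completed_square (x : n → 𝕜) (y : m → 𝕜) :=
    schur_complement_eq₁₁ B D x y hA.isHermitian
  simp only [← dotProduct_mulVec] at completed_square
  simp only [posDef_iff_dotProduct_mulVec, IsHermitian.fromBlocks₁₁ B D hA.isHermitian]
  refine and_congr_right fun _ ↦ ⟨fun h y hy ↦ ?_, fun h z hz ↦ ?_⟩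
  · have minimizer_ne : Sum.elim (-((A⁻¹ * B) *ᵥ y)) y ≠ 0 := fun h₀ ↦
      hy (funext fun j ↦ congrFun h₀ (Sum.inr j))
    simpa [completed_square] using h minimizer_ne
  · obtain ⟨x, y, rfl⟩ : ∃ x y, z = Sum.elim x y := ⟨_, _, (Sum.elim_comp_inl_inr z).symm⟩
    rw [completed_square]
    by_cases hy : y = 0
    · have hx : x ≠ 0 := by
        rintro rfl
        exact hz (by simp [hy])
      simpa [hy] using hA.dotProduct_mulVec_pos hx
    · exact add_pos_of_nonneg_of_pos (hA.posSemidef.dotProduct_mulVec_nonneg _) (h hy)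

theorem posDef_fromBlocks_smul [Finite n] [Finite m] {A : Matrix n n 𝕜} {B : Matrix n m 𝕜}
    {D : Matrix m m 𝕜} (hK : (fromBlocks A B Bᴴ D).PosDef) {δ : 𝕜} (hδ : star δ * δ ≤ 1) :
    (fromBlocks A (δ • B) (δ • B)ᴴ D).PosDef := by
  classical
  have := Fintype.ofFinite n
  have hA : A.PosDef := hK.submatrix Sum.inl_injective
  rw [posDef_fromBlocks_iff_posDef_schurComplement hA] at hK ⊢
  have hX : (Bᴴ * A⁻¹ * B).PosSemidef := hA.inv.posSemidef.conjTranspose_mul_mul_same B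
  have schur_split : D - (δ • B)ᴴ * A⁻¹ * (δ • B) =
      (D - Bᴴ * A⁻¹ * B) + (1 - star δ * δ) • (Bᴴ * A⁻¹ * B) := by
    simp [sub_smul, smul_smul, mul_comm]
  rw [schur_split]
  exact hK.add_posSemidef (hX.smul (sub_nonneg.mpr hδ))

theorem posSemidef_sub_conj_iff_posSemidef_inv_sub_conj_inv [Fintype n] [DecidableEq n]
    [Fintype m] [DecidableEq m] {K : Matrix n n 𝕜} {N : Matrix m m 𝕜} (hK : K.PosDef)
    (hN : N.PosDef) (C : Matrix n m 𝕜) :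
    (N - Cᴴ * K * C).PosSemidef ↔ (K⁻¹ - C * N⁻¹ * Cᴴ).PosSemidef := by
  have : Invertible K := hK.isUnit.invertible
  have : Invertible N := hN.isUnit.invertible
  have : Invertible K⁻¹ := hK.inv.isUnit.invertible
  have schur₁₁ := PosDef.fromBlocks₁₁ Cᴴ K⁻¹ hN
  have schur₂₂ := PosDef.fromBlocks₂₂ N Cᴴ hK.inv
  rw [conjTranspose_conjTranspose] at schur₁₁ schur₂₂
  rw [inv_inv_of_invertible] at schur₂₂
  exact schur₂₂.symm.trans schur₁₁

end BlockMatrices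

section ExplainedVariance

variable {n m : Type*} [Fintype n] [DecidableEq n] [Fintype m] [DecidableEq m]

/-- The explained variance `kᴴ K⁻¹ k` of the best linear prediction from observations with
covariance matrix `K`, where `k` is the vector of covariances with the predicted quantity. It is
meaningful for invertible `K` only: Mathlib sets `K⁻¹ = 0` otherwise. -/
noncomputable def explainedVariance {R : Type*} [CommRing R] [StarRing R] (K : Matrix n n R)
    (k : n → R) : R :=
  star k ⬝ᵥ (K⁻¹ *ᵥ k)

theorem explainedVariance_conjTranspose_mulVec_le {𝕜 : Type*} [Field 𝕜] [PartialOrder 𝕜]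
    [StarRing 𝕜] [StarOrderedRing 𝕜] {K : Matrix n n 𝕜} {N : Matrix m m 𝕜} (hK : K.PosDef)
    (hN : N.PosDef) {C : Matrix n m 𝕜} (hC : (N - Cᴴ * K * C).PosSemidef) (k : n → 𝕜) :
    explainedVariance N (Cᴴ *ᵥ k) ≤ explainedVariance K k := by
  have hinv := (posSemidef_sub_conj_iff_posSemidef_inv_sub_conj_inv hK hN C).mp hC
  have pullback : explainedVariance N (Cᴴ *ᵥ k) = star k ⬝ᵥ ((C * N⁻¹ * Cᴴ) *ᵥ k) := by
    simp only [explainedVariance, star_mulVec, conjTranspose_conjTranspose, ← dotProduct_mulVec,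
      mulVec_mulVec, Matrix.mul_assoc]
  rw [pullback, explainedVariance, ← sub_nonneg, ← dotProduct_sub, ← sub_mulVec]
  exact hinv.dotProduct_mulVec_nonneg k

end ExplainedVariance

section Attenuation

/-- The block-diagonal matrix `diag(1, δ)`, which scales the second group of coordinates by the
attenuation factor `δ`. -/
def attenuation {R : Type*} [CommRing R] (n m : Type*) [DecidableEq n] [DecidableEq m] (δ : R) :
    Matrix (n ⊕ m) (n ⊕ m) R :=
  fromBlocks 1 0 0 (δ • 1)

variable {n m : Type*} [Fintype n] [DecidableEq n] [Fintype m] [DecidableEq m]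

theorem conjTranspose_attenuation_mulVec {R : Type*} [CommRing R] [StarRing R] (δ : R)
    (a : n → R) (d : m → R) :
    (attenuation n m δ)ᴴ *ᵥ Sum.elim a d = Sum.elim a (star δ • d) := by
  simp [attenuation, fromBlocks_conjTranspose, fromBlocks_mulVec, smul_mulVec]

theorem fromBlocks_smul_sub_attenuation_conj {R : Type*} [CommRing R] [StarRing R]
    (A : Matrix n n R) (B : Matrix n m R) (D : Matrix m m R) (δ : R) :
    fromBlocks A (δ • B) (δ • B)ᴴ D -
        (attenuation n m δ)ᴴ * fromBlocks A B Bᴴ D * attenuation n m δ =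
      fromBlocks 0 0 0 ((1 - star δ * δ) • D) := by
  simp [attenuation, fromBlocks_conjTranspose, fromBlocks_multiply, sub_eq_add_neg,
    fromBlocks_neg, fromBlocks_add, add_smul, smul_smul, mul_comm]

theorem explained_variance_decreases_under_attenuation_general {𝕜 : Type*} [Field 𝕜]
    [PartialOrder 𝕜] [StarRing 𝕜] [StarOrderedRing 𝕜] {A : Matrix n n 𝕜} {B : Matrix n m 𝕜}
    {D : Matrix m m 𝕜} (hK : (fromBlocks A B Bᴴ D).PosDef) {δ : 𝕜} (hδ : star δ * δ ≤ 1)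
    (a : n → 𝕜) (d : m → 𝕜) :
    explainedVariance (fromBlocks A (δ • B) (δ • B)ᴴ D) (Sum.elim a (star δ • d)) ≤
      explainedVariance (fromBlocks A B Bᴴ D) (Sum.elim a d) := by
  have hD : D.PosDef := hK.submatrix Sum.inr_injective
  rw [← conjTranspose_attenuation_mulVec]
  refine explainedVariance_conjTranspose_mulVec_le hK (posDef_fromBlocks_smul hK hδ) ?_ _
  rw [fromBlocks_smul_sub_attenuation_conj]
  exact posSemidef_fromBlocks_zero (hD.posSemidef.smul (sub_nonneg.mpr hδ))

end Attenuation

/-- Paper, Appendix (special case of the interval-stretching assumption): after attenuating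
the cross-covariances by `δ ∈ (0,1)`, the explained variance of the Gaussian-process
prediction decreases: `kᵀK⁻¹k ≥ k_δᵀK_δ⁻¹k_δ`. -/
theorem explained_variance_decreases_under_attenuation
    (n m : ℕ) (A : Matrix (Fin n) (Fin n) ℝ) (D : Matrix (Fin m) (Fin m) ℝ)
    (B : Matrix (Fin n) (Fin m) ℝ)
    (hA : A.PosDef) (hD : D.PosDef)
    (a : Fin n → ℝ) (d : Fin m → ℝ)
    (δ : ℝ) (hδ : δ ∈ Set.Ioo (0 : ℝ) 1)
    (hpd : ∀ s ∈ Set.Icc δ 1, (D - s ^ 2 • (Bᵀ * A⁻¹ * B)).PosDef)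
    (K Kδ : Matrix (Fin n ⊕ Fin m) (Fin n ⊕ Fin m) ℝ)
    (hK : K = Matrix.fromBlocks A B Bᵀ D)
    (hKδ : Kδ = Matrix.fromBlocks A (δ • B) (δ • Bᵀ) D)
    (k kδ : Fin n ⊕ Fin m → ℝ)
    (hk : k = Sum.elim a d) (hkδ : kδ = Sum.elim a (δ • d)) :
    k ⬝ᵥ (K⁻¹ *ᵥ k) ≥ kδ ⬝ᵥ (Kδ⁻¹ *ᵥ kδ) := by
  subst hK hKδ hk hkδ
  have schur_posDef : (D - Bᴴ * A⁻¹ * B).PosDef := by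
    simpa using hpd 1 (Set.right_mem_Icc.mpr hδ.2.le)
  have cov_posDef := (posDef_fromBlocks_iff_posDef_schurComplement hA B D).mpr schur_posDef
  have hδ_sq : star δ * δ ≤ 1 := mul_le_one₀ hδ.2.le hδ.1.le hδ.2.le
  simpa [explainedVariance] using
    explained_variance_decreases_under_attenuation_general cov_posDef hδ_sq a d
end
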